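/- arXiv:2501.02769 — 4 statements merged into one kernel-verified Lean document; each statement's English description precedes it below -/
import Mathlib

section
/- (Gelfand) Let B be a complex unital Banach algebra with unit e, and let a ∈ B be invertible with sup_{n∈ℤ} ‖aⁿ‖ < ∞. Suppose the spectrum of a is a singleton, σ(a) = {λ}. Then a = λ e. -/
/-!
Put `q = μ⁻¹ a - 1`. It is quasinilpotent, so `f u = (1 - u q)⁻¹` is an entire function, and `q = 0`
follows from Liouville's theorem once `f` is bounded. Since `1 - u q = (u + 1) - u μ⁻¹ a` and
`|μ| = 1`, and since `a` acts as an isometry for the equivalent norm `x ↦ sup_k ‖aᵏ x‖`, there is a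
constant `C` with `|‖u + 1‖ - ‖u‖| ‖f u‖ ≤ C`. This says nothing on the line `Re u = -1/2`, which
meets a large circle `‖u‖ = s` in two points. These are the zeros of `u² + u + s²`, so multiplying
`f` by this polynomial yields a function that is controlled on the whole circle, hence inside it by
the maximum principle; dividing by `s²` and letting `s → ∞` bounds `f`.
-/

open Filter Topology BoundedContinuousFunction

section PowerBounded

theorem norm_compContinuous_homeomorph {X Y E : Type*} [TopologicalSpace X] [TopologicalSpace Y]
    [SeminormedAddCommGroup E] (x : Y →ᵇ E) (e : X ≃ₜ Y) :
    ‖x.compContinuous (e : C(X, Y))‖ = ‖x‖ := by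
  refine le_antisymm (norm_compContinuous_le _ _) ((norm_le (norm_nonneg _)).2 fun y => ?_)
  simpa using (x.compContinuous (e : C(X, Y))).norm_coe_le_norm (e.symm y)

theorem abs_norm_sub_norm_mul_norm_le_norm_smul_sub_smul_comp {𝕜 X E : Type*} [NormedField 𝕜]
    [TopologicalSpace X] [SeminormedAddCommGroup E] [NormedSpace 𝕜 E] (z w : 𝕜) (x : X →ᵇ E)
    (e : X ≃ₜ X) :
    |‖z‖ - ‖w‖| * ‖x‖ ≤ ‖z • x - w • x.compContinuous (e : C(X, X))‖ :=
  calc |‖z‖ - ‖w‖| * ‖x‖ = |‖z • x‖ - ‖w • x.compContinuous (e : C(X, X))‖| := by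
        rw [norm_smul, norm_smul, norm_compContinuous_homeomorph, ← sub_mul, abs_mul, abs_norm]
    _ ≤ _ := abs_norm_sub_norm_le _ _

variable {𝕜 B : Type*} [NormedField 𝕜]

theorem abs_norm_sub_norm_mul_norm_le_of_norm_zpow_le [SeminormedRing B] [NormedAlgebra 𝕜 B]
    {a : Bˣ} {M : ℝ} (hM : ∀ n : ℤ, ‖((a ^ n : Bˣ) : B)‖ ≤ M) (z w : 𝕜) (b : B) :
    |‖z‖ - ‖w‖| * ‖b‖ ≤ M * ‖z • b - w • (a * b)‖ := by
  have norm_zpow_mul_le (c : B) (n : ℤ) : ‖((a ^ n : Bˣ) : B) * c‖ ≤ M * ‖c‖ :=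
    norm_mul_le_of_le (hM n) le_rfl
  let orbit : ℤ →ᵇ B := ofNormedAddCommGroupDiscrete (fun n => ((a ^ n : Bˣ) : B) * b) _
    (norm_zpow_mul_le b)
  let shift : ℤ ≃ₜ ℤ := Homeomorph.addRight 1
  have orbit_sub (n : ℤ) : (z • orbit - w • orbit.compContinuous (shift : C(ℤ, ℤ))) n =
      ((a ^ n : Bˣ) : B) * (z • b - w • (a * b)) := by
    simp [orbit, shift, zpow_add_one, mul_sub, mul_assoc]
  have hM0 : 0 ≤ M := (norm_nonneg _).trans (hM 0)
  calc |‖z‖ - ‖w‖| * ‖b‖ ≤ |‖z‖ - ‖w‖| * ‖orbit‖ := by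
        gcongr
        simpa [orbit] using orbit.norm_coe_le_norm 0
    _ ≤ ‖z • orbit - w • orbit.compContinuous (shift : C(ℤ, ℤ))‖ :=
        abs_norm_sub_norm_mul_norm_le_norm_smul_sub_smul_comp z w orbit shift
    _ ≤ M * ‖z • b - w • (a * b)‖ := by
        refine (norm_le (by positivity)).2 fun n => ?_
        rw [orbit_sub]
        exact norm_zpow_mul_le _ n

theorem abs_norm_add_one_sub_norm_mul_norm_inverse_le [SeminormedRing B] [NormedAlgebra 𝕜 B]
    {a : Bˣ} {M : ℝ} (hM : ∀ n : ℤ, ‖((a ^ n : Bˣ) : B)‖ ≤ M) {c u : 𝕜} (hc : ‖c‖ = 1)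
    (hu : IsUnit (1 - u • (c • (a : B) - 1))) :
    |‖u + 1‖ - ‖u‖| * ‖Ring.inverse (1 - u • (c • (a : B) - 1))‖ ≤ M * ‖(1 : B)‖ := by
  set R := Ring.inverse (1 - u • (c • (a : B) - 1))
  have resolvent_eq : (u + 1) • R - (u * c) • (a * R) = 1 := by
    calc (u + 1) • R - (u * c) • (a * R) = (1 - u • (c • (a : B) - 1)) * R := by
          simp only [sub_mul, smul_sub, add_smul, mul_smul, smul_mul_assoc, one_mul, one_smul]
          abel
      _ = 1 := Ring.mul_inverse_cancel _ hu
  simpa [hc, resolvent_eq] using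
    abs_norm_sub_norm_mul_norm_le_of_norm_zpow_le hM (u + 1) (u * c) R

variable [NormedRing B] [NormedAlgebra 𝕜 B] [CompleteSpace B]

theorem norm_le_one_of_mem_spectrum_of_norm_pow_le {b : B} {M : ℝ} (hM : ∀ n : ℕ, ‖b ^ n‖ ≤ M)
    {k : 𝕜} (hk : k ∈ spectrum 𝕜 b) : ‖k‖ ≤ 1 := by
  by_contra! one_lt_norm
  obtain ⟨n, hn⟩ := pow_unbounded_of_one_lt (M * ‖(1 : B)‖) one_lt_norm
  refine hn.not_ge ?_
  calc ‖k‖ ^ n = ‖k ^ n‖ := (norm_pow k n).symm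
    _ ≤ ‖b ^ n‖ * ‖(1 : B)‖ := spectrum.norm_le_norm_mul_of_mem (spectrum.pow_mem_pow b n hk)
    _ ≤ M * ‖(1 : B)‖ := by gcongr; exact hM n

theorem norm_eq_one_of_mem_spectrum_of_norm_zpow_le {a : Bˣ} {M : ℝ}
    (hM : ∀ n : ℤ, ‖((a ^ n : Bˣ) : B)‖ ≤ M) {k : 𝕜} (hk : k ∈ spectrum 𝕜 (a : B)) :
    ‖k‖ = 1 := by
  lift k to 𝕜ˣ using (spectrum.ne_zero_of_mem_of_unit hk).isUnit
  have norm_le : ‖(k : 𝕜)‖ ≤ 1 :=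
    norm_le_one_of_mem_spectrum_of_norm_pow_le (fun n => by simpa using hM n) hk
  have norm_inv_le : ‖((k⁻¹ : 𝕜ˣ) : 𝕜)‖ ≤ 1 :=
    norm_le_one_of_mem_spectrum_of_norm_pow_le (fun n => by simpa using hM (-n))
      (spectrum.inv_mem_iff.1 hk)
  rw [Units.val_inv_eq_inv_val, norm_inv, inv_le_one₀ (norm_pos_iff.2 k.ne_zero)] at norm_inv_le
  exact norm_le.antisymm norm_inv_le

end PowerBounded

section Entire

theorem norm_sq_add_self_add_norm_sq (u : ℂ) :
    ‖u ^ 2 + u + (‖u‖ : ℂ) ^ 2‖ = ‖u‖ * |‖u + 1‖ ^ 2 - ‖u‖ ^ 2| := by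
  have norm_sq_sub : ‖u + 1‖ ^ 2 - ‖u‖ ^ 2 = 2 * u.re + 1 := by
    simp only [Complex.sq_norm, Complex.normSq_apply, Complex.add_re, Complex.add_im,
      Complex.one_re, Complex.one_im]
    ring
  have factorization : u ^ 2 + u + (‖u‖ : ℂ) ^ 2 = u * ((2 * u.re + 1 : ℝ) : ℂ) := by
    rw [← Complex.mul_conj', Complex.ofReal_add, ← Complex.add_conj, Complex.ofReal_one]
    ring
  rw [factorization, norm_sq_sub, norm_mul, Complex.norm_real, Real.norm_eq_abs]

variable {E : Type*} [NormedAddCommGroup E] [NormedSpace ℂ E] {f : ℂ → E} {M : ℝ}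

theorem norm_sq_add_self_add_sq_mul_norm_le (hf : Differentiable ℂ f)
    (hM : ∀ u, |‖u + 1‖ - ‖u‖| * ‖f u‖ ≤ M) {s : ℝ} (hs : 0 < s) {v : ℂ} (hv : ‖v‖ ≤ s) :
    ‖v ^ 2 + v + (s : ℂ) ^ 2‖ * ‖f v‖ ≤ s * (2 * s + 1) * M := by
  rw [← norm_smul]
  refine Complex.norm_le_of_forall_mem_frontier_norm_le
    (f := fun u => (u ^ 2 + u + (s : ℂ) ^ 2) • f u) (Metric.isBounded_ball (x := 0) (r := s))
    (Differentiable.diffContOnCl (by fun_prop)) (fun u hu => ?_)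
    (by rwa [closure_ball _ hs.ne', mem_closedBall_zero_iff])
  rw [frontier_ball _ hs.ne', mem_sphere_zero_iff_norm] at hu
  subst hu
  calc ‖(u ^ 2 + u + (‖u‖ : ℂ) ^ 2) • f u‖
      = ‖u‖ * (‖u + 1‖ + ‖u‖) * (|‖u + 1‖ - ‖u‖| * ‖f u‖) := by
        rw [norm_smul, norm_sq_add_self_add_norm_sq, sq_sub_sq, abs_mul,
          abs_of_nonneg (by positivity)]
        ring
    _ ≤ ‖u‖ * (2 * ‖u‖ + 1) * M := by
        gcongr ‖u‖ * ?_ * ?_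
        · linarith [norm_add_le u 1, norm_one (α := ℂ)]
        · exact hM u

theorem norm_le_two_mul_of_abs_norm_add_one_sub_norm_mul_le (hf : Differentiable ℂ f)
    (hM : ∀ u, |‖u + 1‖ - ‖u‖| * ‖f u‖ ≤ M) (v : ℂ) : ‖f v‖ ≤ 2 * M := by
  have tendsto_left :
      Tendsto (fun r : ℝ => ‖(v ^ 2 + v) * (r : ℂ) ^ 2 + 1‖ * ‖f v‖) (𝓝[>] 0) (𝓝 ‖f v‖) :=
    tendsto_nhdsWithin_of_tendsto_nhds (Continuous.tendsto' (by fun_prop) _ _ (by simp))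
  have tendsto_right : Tendsto (fun r : ℝ => (2 + r) * M) (𝓝[>] 0) (𝓝 (2 * M)) :=
    tendsto_nhdsWithin_of_tendsto_nhds (Continuous.tendsto' (by fun_prop) _ _ (by simp))
  refine le_of_tendsto_of_tendsto tendsto_left tendsto_right ?_
  filter_upwards [self_mem_nhdsWithin, tendsto_inv_nhdsGT_zero.eventually_ge_atTop ‖v‖]
    with r (hr : 0 < r) hvr
  have rescale : (v ^ 2 + v) * (r : ℂ) ^ 2 + 1 =
      (r : ℂ) ^ 2 * (v ^ 2 + v + ((r⁻¹ : ℝ) : ℂ) ^ 2) := by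
    have hr0 : (r : ℂ) ≠ 0 := Complex.ofReal_ne_zero.2 hr.ne'
    rw [Complex.ofReal_inv, mul_add, ← mul_pow, mul_inv_cancel₀ hr0, one_pow, mul_comm]
  calc ‖(v ^ 2 + v) * (r : ℂ) ^ 2 + 1‖ * ‖f v‖
      = r ^ 2 * (‖v ^ 2 + v + ((r⁻¹ : ℝ) : ℂ) ^ 2‖ * ‖f v‖) := by
        rw [rescale, norm_mul, norm_pow, Complex.norm_of_nonneg hr.le, mul_assoc]
    _ ≤ r ^ 2 * (r⁻¹ * (2 * r⁻¹ + 1) * M) := by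
        gcongr ?_ * ?_
        exact norm_sq_add_self_add_sq_mul_norm_le hf hM (inv_pos.2 hr) hvr
    _ = (2 + r) * M := by field_simp

end Entire

section Quasinilpotent

theorem spectralRadius_inv_smul_sub_one_eq_zero {𝕜 A : Type*} [NormedField 𝕜] [Ring A]
    [Algebra 𝕜 A] {a : A} {k : 𝕜} (hk : k ≠ 0) (ha : spectrum 𝕜 a = {k}) :
    spectralRadius 𝕜 (k⁻¹ • a - 1) = 0 := by
  have spectrum_inv_smul : spectrum 𝕜 (k⁻¹ • a) = {1} := by
    simpa [ha, Units.smul_def, hk] using spectrum.unit_smul_eq_smul a (Units.mk0 k hk)⁻¹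
  have spectrum_sub_one : spectrum 𝕜 (k⁻¹ • a - 1) = {0} := by
    rw [← map_one (algebraMap 𝕜 A), ← spectrum.sub_singleton_eq, spectrum_inv_smul]
    simp
  simp [spectralRadius, spectrum_sub_one]

theorem isUnit_one_sub_smul_of_spectralRadius_eq_zero {𝕜 A : Type*} [NontriviallyNormedField 𝕜]
    [NormedRing A] [NormedAlgebra 𝕜 A] {q : A} (hq : spectralRadius 𝕜 q = 0) (u : 𝕜) :
    IsUnit (1 - u • q) :=
  spectrum.isUnit_one_sub_smul_of_lt_inv_radius (by simp [hq])

variable {B : Type*} [NormedRing B] [NormedAlgebra ℂ B] [CompleteSpace B] {q : B}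

theorem differentiable_inverse_one_sub_smul_of_spectralRadius_eq_zero
    (hq : spectralRadius ℂ q = 0) : Differentiable ℂ fun u : ℂ => Ring.inverse (1 - u • q) :=
  fun u => DifferentiableAt.comp (g := Ring.inverse) u
    (differentiableAt_inverse (isUnit_one_sub_smul_of_spectralRadius_eq_zero hq u)) (by fun_prop)

theorem eq_zero_of_spectralRadius_eq_zero_of_norm_inverse_le (hq : spectralRadius ℂ q = 0) {C : ℝ}
    (hC : ∀ u : ℂ, ‖Ring.inverse (1 - u • q)‖ ≤ C) : q = 0 := by
  have hbounded : Bornology.IsBounded (Set.range fun u : ℂ => Ring.inverse (1 - u • q)) :=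
    isBounded_iff_forall_norm_le.2 ⟨C, Set.forall_mem_range.2 hC⟩
  have inverse_eq_one : Ring.inverse (1 - q) = 1 := by
    simpa using (differentiable_inverse_one_sub_smul_of_spectralRadius_eq_zero
      hq).apply_eq_apply_of_bounded hbounded 1 0
  have hunit : IsUnit (1 - q) := by
    simpa using isUnit_one_sub_smul_of_spectralRadius_eq_zero hq 1
  simpa [inverse_eq_one] using Ring.mul_inverse_cancel _ hunit

end Quasinilpotent

/-- Gelfand: an invertible element of a complex unital Banach algebra with
uniformly bounded integer powers whose spectrum is a singleton {λ} equals λ·e. -/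
theorem gelfand_singleton_spectrum
    {B : Type*} [NormedRing B] [NormedAlgebra ℂ B] [CompleteSpace B]
    (a : Bˣ) (hpb : ∃ M : ℝ, ∀ n : ℤ, ‖((a ^ n : Bˣ) : B)‖ ≤ M)
    (μ : ℂ) (hspec : spectrum ℂ (a : B) = {μ}) :
    (a : B) = μ • (1 : B) := by
  obtain ⟨M, hM⟩ := hpb
  have hμ : ‖μ‖ = 1 := norm_eq_one_of_mem_spectrum_of_norm_zpow_le hM (by simp [hspec])
  have hμ0 : μ ≠ 0 := norm_ne_zero_iff.1 (by simp [hμ])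
  have hradius : spectralRadius ℂ (μ⁻¹ • (a : B) - 1) = 0 :=
    spectralRadius_inv_smul_sub_one_eq_zero hμ0 hspec
  have inverse_bound (u : ℂ) :
      |‖u + 1‖ - ‖u‖| * ‖Ring.inverse (1 - u • (μ⁻¹ • (a : B) - 1))‖ ≤ M * ‖(1 : B)‖ :=
    abs_norm_add_one_sub_norm_mul_norm_inverse_le hM (by simp [hμ])
      (isUnit_one_sub_smul_of_spectralRadius_eq_zero hradius u)
  have sub_one_eq_zero : μ⁻¹ • (a : B) - 1 = 0 :=
    eq_zero_of_spectralRadius_eq_zero_of_norm_inverse_le hradius <|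
      norm_le_two_mul_of_abs_norm_add_one_sub_norm_mul_le
        (differentiable_inverse_one_sub_smul_of_spectralRadius_eq_zero hradius) inverse_bound
  rwa [sub_eq_zero, inv_smul_eq_iff₀ hμ0] at sub_one_eq_zero
end

section
/- Let X be a complex Banach space, let T : X → X be a power-bounded operator, and let λ be an isolated point of the spectrum σ(T). Then λ is an eigenvalue of T: there exists x ∈ X with x ≠ 0 and T x = λ x. -/
/-!
Expanding the resolvent `R` of `T` in powers of `T` outside the unit circle and in powers of `T⁻¹`
inside it shows that `‖R w‖ * |‖w‖ - 1| ^ (k + 1)` is locally bounded when `‖T ^ n‖` grows at most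
like `|n| ^ k`. The maximum principle on discs of radius comparable to `‖z - μ‖` turns this into
`‖R z‖ = O(‖z - μ‖ ^ (-(k + 1)))` near an isolated spectral point `μ`, which is therefore a pole
of `R`. If `F` is the leading Laurent coefficient there, then `(z - T) * R z = 1` forces
`(μ - T) * F = 0`, so every nonzero vector in the range of `F` is an eigenvector.
-/

open Asymptotics Filter Metric Topology
open scoped ComplexConjugate Nat

section NeumannSeries

theorem ringInverse_one_sub_eq_tsum_pow {A : Type*} [Ring A] [TopologicalSpace A]
    [IsTopologicalRing A] [T2Space A] {x : A} (hx : Summable (x ^ · : ℕ → A)) :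
    Ring.inverse (1 - x) = ∑' n : ℕ, x ^ n :=
  Ring.inverse_unit ⟨1 - x, _, hx.one_sub_mul_tsum_pow, hx.tsum_pow_mul_one_sub⟩

theorem succ_pow_le_factorial_mul_choose (n k : ℕ) : (n + 1) ^ k ≤ k ! * (n + k).choose k :=
  ((n + 1).pow_succ_le_ascFactorial k).trans_eq (n.ascFactorial_eq_factorial_mul_choose k)

theorem norm_ringInverse_one_sub_mul_pow_le {A : Type*} [NormedRing A] [CompleteSpace A]
    {x : A} {M r : ℝ} {k : ℕ} (hr₀ : 0 ≤ r) (hr₁ : r < 1)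
    (hx : ∀ n : ℕ, ‖x ^ n‖ ≤ M * (n + 1) ^ k * r ^ n) :
    ‖Ring.inverse (1 - x)‖ * (1 - r) ^ (k + 1) ≤ M * k ! := by
  have hM : 0 ≤ M := (norm_nonneg (x ^ 0)).trans (by simpa using hx 0)
  have hbound (n : ℕ) : ‖x ^ n‖ ≤ M * k ! * ((n + k).choose k * r ^ n) := by
    have hchoose : ((n : ℝ) + 1) ^ k ≤ k ! * (n + k).choose k :=
      mod_cast succ_pow_le_factorial_mul_choose n k
    calc ‖x ^ n‖ ≤ M * (n + 1) ^ k * r ^ n := hx n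
      _ ≤ M * (k ! * (n + k).choose k) * r ^ n := by gcongr
      _ = M * k ! * ((n + k).choose k * r ^ n) := by ring
  have hr : ‖r‖ < 1 := by rwa [Real.norm_of_nonneg hr₀]
  have hmajorant : HasSum (fun n : ℕ ↦ M * k ! * ((n + k).choose k * r ^ n))
      (M * k ! * (1 / (1 - r) ^ (k + 1))) :=
    (hasSum_choose_mul_geometric_of_norm_lt_one k hr).mul_left (M * k !)
  have hsum : Summable (x ^ · : ℕ → A) := .of_norm_bounded hmajorant.summable hbound
  rw [ringInverse_one_sub_eq_tsum_pow hsum, ← le_div_iff₀ (pow_pos (sub_pos.2 hr₁) _),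
    ← mul_one_div]
  exact tsum_of_norm_bounded hmajorant hbound

end NeumannSeries

section ResolventGrowth

variable {𝕜 A : Type*} [NormedField 𝕜] [NormedRing A] [NormedAlgebra 𝕜 A]

theorem norm_smul_pow_le {b : A} {M : ℝ} {k : ℕ} (hb : ∀ n : ℕ, ‖b ^ n‖ ≤ M * (n + 1) ^ k)
    (v : 𝕜) (n : ℕ) : ‖(v • b) ^ n‖ ≤ M * (n + 1) ^ k * ‖v‖ ^ n := by
  rw [smul_pow, norm_smul, norm_pow, mul_comm]
  gcongr
  exact hb n

variable [CompleteSpace A] {M : ℝ} {k : ℕ}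

theorem norm_resolvent_mul_norm_sub_one_pow_le {a : A}
    (ha : ∀ n : ℕ, ‖a ^ n‖ ≤ M * (n + 1) ^ k) {w : 𝕜} (hw : 1 < ‖w‖) :
    ‖resolvent a w‖ * (‖w‖ - 1) ^ (k + 1) ≤ M * k ! * ‖w‖ ^ k := by
  have hw₀ : 0 < ‖w‖ := one_pos.trans hw
  have hresolvent : w • resolvent a w = Ring.inverse (1 - w⁻¹ • a) := by
    simpa [resolvent, Units.smul_def] using
      spectrum.units_smul_resolvent_self (r := Units.mk0 w (norm_pos_iff.1 hw₀)) (a := a)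
  have hneumann := norm_ringInverse_one_sub_mul_pow_le (norm_nonneg w⁻¹)
    (by simpa using inv_lt_one_of_one_lt₀ hw) (norm_smul_pow_le ha w⁻¹)
  rw [← hresolvent, norm_smul, norm_inv] at hneumann
  calc ‖resolvent a w‖ * (‖w‖ - 1) ^ (k + 1)
      = ‖w‖ * ‖resolvent a w‖ * (1 - ‖w‖⁻¹) ^ (k + 1) * ‖w‖ ^ k := by
        rw [show ‖w‖ - 1 = ‖w‖ * (1 - ‖w‖⁻¹) by field_simp, mul_pow]
        ring
    _ ≤ M * k ! * ‖w‖ ^ k := by gcongr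

theorem norm_resolvent_units_mul_one_sub_norm_pow_le {T : Aˣ}
    (hT : ∀ n : ℕ, ‖(↑T⁻¹ : A) ^ n‖ ≤ M * (n + 1) ^ k) {w : 𝕜} (hw : ‖w‖ < 1) :
    ‖resolvent (T : A) w‖ * (1 - ‖w‖) ^ (k + 1) ≤ M * k ! * ‖(↑T⁻¹ : A)‖ := by
  have hfactor : algebraMap 𝕜 A w - T = ↑(-T) * (1 - w • (↑T⁻¹ : A)) := by
    simp [Algebra.algebraMap_eq_smul_one, mul_sub, ← sub_eq_neg_add]
  have hresolvent : ‖resolvent (T : A) w‖ ≤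
      ‖Ring.inverse (1 - w • (↑T⁻¹ : A))‖ * ‖(↑T⁻¹ : A)‖ := by
    rw [resolvent, hfactor, Ring.inverse_mul (.inl (-T).isUnit), Ring.inverse_unit]
    simpa using norm_mul_le (Ring.inverse (1 - w • (↑T⁻¹ : A))) (↑(-T)⁻¹ : A)
  calc ‖resolvent (T : A) w‖ * (1 - ‖w‖) ^ (k + 1)
      ≤ ‖Ring.inverse (1 - w • (↑T⁻¹ : A))‖ * ‖(↑T⁻¹ : A)‖ * (1 - ‖w‖) ^ (k + 1) := by
        gcongr
    _ = ‖Ring.inverse (1 - w • (↑T⁻¹ : A))‖ * (1 - ‖w‖) ^ (k + 1) * ‖(↑T⁻¹ : A)‖ := by ring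
    _ ≤ M * k ! * ‖(↑T⁻¹ : A)‖ := by
        exact mul_le_mul_of_nonneg_right
          (norm_ringInverse_one_sub_mul_pow_le (norm_nonneg w) hw (norm_smul_pow_le hT w))
          (norm_nonneg _)

theorem norm_resolvent_mul_abs_norm_sub_one_pow_le {T : Aˣ}
    (hT : ∀ n : ℤ, ‖(↑(T ^ n) : A)‖ ≤ M * (|(n : ℝ)| + 1) ^ k) (w : 𝕜) :
    ‖resolvent (T : A) w‖ * |‖w‖ - 1| ^ (k + 1) ≤
      M * k ! * (‖w‖ ^ k + ‖(↑T⁻¹ : A)‖) := by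
  have hM : 0 ≤ M := (norm_nonneg _).trans (by simpa using hT 0)
  rcases lt_trichotomy ‖w‖ 1 with hw | hw | hw
  · rw [abs_sub_comm, abs_of_pos (sub_pos.2 hw)]
    refine (norm_resolvent_units_mul_one_sub_norm_pow_le
      (fun n ↦ by simpa using hT (-n)) hw).trans ?_
    gcongr
    exact le_add_of_nonneg_left (by positivity)
  · simp only [hw, sub_self, abs_zero, zero_pow k.succ_ne_zero, mul_zero]
    positivity
  · rw [abs_of_pos (sub_pos.2 hw)]
    refine (norm_resolvent_mul_norm_sub_one_pow_le
      (fun n ↦ by simpa using hT n) hw).trans ?_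
    gcongr
    exact le_add_of_nonneg_right (norm_nonneg _)

end ResolventGrowth

section UnitCircleGrowth

/-- The polynomial in `w` agreeing with `(w - z) * (‖w‖ ^ 2 - 1)` on the circle `sphere z s`,
obtained by substituting `conj w = conj z + s ^ 2 / (w - z)`. It converts growth measured by the
distance to the unit circle into a bound accessible to the maximum principle. -/
noncomputable def unitCircleFactor (z : ℂ) (s : ℝ) (w : ℂ) : ℂ :=
  (w * conj z - 1) * (w - z) + s ^ 2 * w

theorem unitCircleFactor_eq_of_mem_sphere {z w : ℂ} {s : ℝ} (hw : w ∈ sphere z s) :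
    unitCircleFactor z s w = (w - z) * ((‖w‖ ^ 2 - 1 : ℝ) : ℂ) := by
  have hs : (w - z) * conj (w - z) = (s : ℂ) ^ 2 := by
    rw [Complex.mul_conj', mem_sphere_iff_norm.1 hw]
  push_cast
  rw [unitCircleFactor, ← Complex.mul_conj', ← hs, map_sub]
  ring

theorem norm_unitCircleFactor_of_mem_sphere {z w : ℂ} {s : ℝ} (hw : w ∈ sphere z s) :
    ‖unitCircleFactor z s w‖ = s * (|‖w‖ - 1| * (‖w‖ + 1)) := by
  rw [unitCircleFactor_eq_of_mem_sphere hw, norm_mul, mem_sphere_iff_norm.1 hw, Complex.norm_real,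
    Real.norm_eq_abs, show ‖w‖ ^ 2 - 1 = (‖w‖ - 1) * (‖w‖ + 1) by ring, abs_mul,
    abs_of_pos (by positivity : 0 < ‖w‖ + 1)]

variable {E : Type*} [NormedAddCommGroup E] [NormedSpace ℂ E]

theorem mul_norm_pow_mul_norm_le_of_forall_mem_sphere {f : ℂ → E} {z : ℂ} {s C : ℝ} {k : ℕ}
    (hs : 0 < s) (hf : DiffContOnCl ℂ f (ball z s))
    (hC : ∀ w ∈ sphere z s, ‖f w‖ * |‖w‖ - 1| ^ k ≤ C) :
    (s * ‖z‖) ^ k * ‖f z‖ ≤ C * (‖z‖ + s + 1) ^ k := by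
  set g : ℂ → E := fun w ↦ unitCircleFactor z s w ^ k • f w
  have hg : DiffContOnCl ℂ g (ball z s) :=
    .smul (Differentiable.diffContOnCl (by unfold unitCircleFactor; fun_prop)) hf
  have hg_frontier : ∀ w ∈ frontier (ball z s), ‖g w‖ ≤ s ^ k * (C * (‖z‖ + s + 1) ^ k) := by
    rw [frontier_ball z hs.ne']
    intro w hw
    have hC₀ : 0 ≤ C := le_trans (by positivity) (hC w hw)
    have hnorm : ‖w‖ ≤ ‖z‖ + s := norm_le_of_mem_closedBall (sphere_subset_closedBall hw)
    calc ‖g w‖ = s ^ k * (‖f w‖ * |‖w‖ - 1| ^ k * (‖w‖ + 1) ^ k) := by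
          rw [norm_smul, norm_pow, norm_unitCircleFactor_of_mem_sphere hw, mul_pow, mul_pow]
          ring
      _ ≤ s ^ k * (C * (‖z‖ + s + 1) ^ k) := by
          gcongr
          exact hC w hw
  have hg_center : ‖g z‖ = s ^ k * ((s * ‖z‖) ^ k * ‖f z‖) := by
    simp only [g, unitCircleFactor, sub_self, mul_zero, zero_add, norm_smul, norm_pow, norm_mul,
      Complex.norm_real, Real.norm_of_nonneg hs.le]
    ring
  have hmax : ‖g z‖ ≤ s ^ k * (C * (‖z‖ + s + 1) ^ k) :=
    Complex.norm_le_of_forall_mem_frontier_norm_le isBounded_ball hg hg_frontier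
      (subset_closure (mem_ball_self hs))
  rw [hg_center] at hmax
  exact le_of_mul_le_mul_left hmax (pow_pos hs k)

theorem eventually_forall_mem_closedBall_half_dist {Y : Type*} [MetricSpace Y] {a : Y}
    {p : Y → Prop} (hp : ∀ᶠ w in 𝓝[≠] a, p w) :
    ∀ᶠ z in 𝓝[≠] a, ∀ w ∈ closedBall z (dist z a / 2), p w := by
  obtain ⟨δ, hδ, hball⟩ := eventually_nhds_iff_ball.1 (eventually_nhdsWithin_iff.1 hp)
  filter_upwards [self_mem_nhdsWithin, mem_nhdsWithin_of_mem_nhds (ball_mem_nhds a (half_pos hδ))]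
    with z hza hz w hw
  have hzw : dist w z ≤ dist z a / 2 := hw
  have hzδ : dist z a < δ / 2 := hz
  have hza_pos : 0 < dist z a := dist_pos.2 hza
  refine hball w ?_ ?_
  · rw [mem_ball]
    linarith [dist_triangle w z a]
  · rintro rfl
    linarith [dist_comm w z]

theorem isBigO_sub_pow_smul_of_norm_mul_abs_norm_sub_one_pow_le {f : ℂ → E} {μ : ℂ} {C : ℝ} {k : ℕ}
    (hμ : μ ≠ 0) (hf : ∀ᶠ w in 𝓝[≠] μ, DifferentiableAt ℂ f w)
    (hC : ∀ᶠ w in 𝓝[≠] μ, ‖f w‖ * |‖w‖ - 1| ^ k ≤ C) :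
    (fun z ↦ (z - μ) ^ k • f z) =O[𝓝[≠] μ] (fun _ ↦ (1 : ℝ)) := by
  set B : ℂ → ℝ := fun z ↦ C * (2 * (‖z‖ + ‖z - μ‖ / 2 + 1) / ‖z‖) ^ k
  have hB : B =O[𝓝[≠] μ] (fun _ ↦ (1 : ℝ)) := by
    have hB_cont : ContinuousAt B μ := by
      have := norm_ne_zero_iff.2 hμ
      fun_prop (disch := assumption)
    exact (hB_cont.tendsto.isBigO_one ℝ).mono nhdsWithin_le_nhds
  refine IsBigO.trans (.of_bound' ?_) hB
  filter_upwards [self_mem_nhdsWithin, mem_nhdsWithin_of_mem_nhds (isOpen_ne.mem_nhds hμ),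
    eventually_forall_mem_closedBall_half_dist (hf.and hC)] with z hzμ hz₀ hball
  have hs : 0 < dist z μ / 2 := half_pos (dist_pos.2 hzμ)
  have hdiff : DiffContOnCl ℂ f (ball z (dist z μ / 2)) := by
    apply DifferentiableOn.diffContOnCl
    rw [closure_ball z hs.ne']
    exact fun w hw ↦ (hball w hw).1.differentiableWithinAt
  have hdisc := mul_norm_pow_mul_norm_le_of_forall_mem_sphere hs hdiff
    fun w hw ↦ (hball w (sphere_subset_closedBall hw)).2
  rw [dist_eq_norm] at hdisc
  calc ‖(z - μ) ^ k • f z‖ = (‖z - μ‖ / 2 * ‖z‖) ^ k * ‖f z‖ * (2 / ‖z‖) ^ k := by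
        rw [norm_smul, norm_pow, mul_right_comm, ← mul_pow]
        congr 2
        field_simp [norm_ne_zero_iff.2 hz₀]
    _ ≤ C * (‖z‖ + ‖z - μ‖ / 2 + 1) ^ k * (2 / ‖z‖) ^ k := by gcongr
    _ = B z := by
        rw [mul_assoc, ← mul_pow]
        congr 2
        ring
    _ ≤ ‖B z‖ := Real.le_norm_self _

theorem meromorphicAt_of_isBigO_sub_pow_smul [CompleteSpace E] {f : ℂ → E} {c : ℂ} {k : ℕ}
    (hf : ∀ᶠ z in 𝓝[≠] c, DifferentiableAt ℂ f z)
    (hO : (fun z ↦ (z - c) ^ k • f z) =O[𝓝[≠] c] (fun _ ↦ (1 : ℝ))) :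
    MeromorphicAt f c := by
  refine ⟨k + 1, Complex.analyticAt_of_differentiable_on_punctured_nhds_of_continuousAt ?_ ?_⟩
  · filter_upwards [hf] with z hz
    exact DifferentiableAt.smul (by fun_prop) hz
  · have hsub : Tendsto (fun z ↦ z - c) (𝓝[≠] c) (𝓝 0) :=
      tendsto_sub_nhds_zero_iff.2 nhdsWithin_le_nhds
    rw [continuousAt_iff_punctured_nhds]
    simpa [pow_succ', mul_smul] using
      hsub.zero_smul_isBoundedUnder_le ((isBigO_one_iff ℝ).1 hO)

end UnitCircleGrowth

section MeromorphicResolvent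

variable {𝕜 A : Type*} [NontriviallyNormedField 𝕜] [NormedRing A] [NormedAlgebra 𝕜 A]
  {a : A} {μ : 𝕜}

theorem tendsto_algebraMap_sub (a : A) (μ : 𝕜) :
    Tendsto (fun z ↦ algebraMap 𝕜 A z - a) (𝓝 μ) (𝓝 (algebraMap 𝕜 A μ - a)) :=
  ((continuous_algebraMap 𝕜 A).tendsto μ).sub_const a

theorem mem_resolventSet_of_tendsto_resolvent {l : Filter 𝕜} [l.NeBot] (hl : l ≤ 𝓝 μ)
    (hmem : ∀ᶠ z in l, z ∈ resolventSet 𝕜 a) {L : A} (hL : Tendsto (resolvent a) l (𝓝 L)) :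
    μ ∈ resolventSet 𝕜 a := by
  have hsub := (tendsto_algebraMap_sub a μ).mono_left hl
  have hright : (algebraMap 𝕜 A μ - a) * L = 1 :=
    tendsto_nhds_unique (hsub.mul hL) (tendsto_const_nhds.congr'
      (hmem.mono fun _ hz ↦ (Ring.mul_inverse_cancel _ hz).symm))
  have hleft : L * (algebraMap 𝕜 A μ - a) = 1 :=
    tendsto_nhds_unique (hL.mul hsub) (tendsto_const_nhds.congr'
      (hmem.mono fun _ hz ↦ (Ring.inverse_mul_cancel _ hz).symm))
  exact ⟨⟨_, L, hright, hleft⟩, rfl⟩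

theorem meromorphicOrderAt_resolvent_neg (hμ : μ ∈ spectrum 𝕜 a)
    (hiso : ∀ᶠ z in 𝓝[≠] μ, z ∈ resolventSet 𝕜 a) (hmer : MeromorphicAt (resolvent a) μ) :
    meromorphicOrderAt (resolvent a) μ < 0 := by
  by_contra! hnonneg
  obtain ⟨L, hL⟩ := tendsto_nhds_of_meromorphicOrderAt_nonneg hmer hnonneg
  exact hμ (mem_resolventSet_of_tendsto_resolvent nhdsWithin_le_nhds hiso hL)

theorem exists_ne_zero_algebraMap_sub_mul_eq_zero (hμ : μ ∈ spectrum 𝕜 a)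
    (hiso : ∀ᶠ z in 𝓝[≠] μ, z ∈ resolventSet 𝕜 a) (hmer : MeromorphicAt (resolvent a) μ) :
    ∃ F : A, F ≠ 0 ∧ (algebraMap 𝕜 A μ - a) * F = 0 := by
  have hneg := meromorphicOrderAt_resolvent_neg hμ hiso hmer
  obtain ⟨n, hn⟩ := WithTop.ne_top_iff_exists.1 hneg.ne_top
  obtain ⟨g, hg, hgμ, hresolvent⟩ := (meromorphicOrderAt_eq_int_iff hmer).1 hn.symm
  have hn_neg : n < 0 := by
    rw [← hn] at hneg
    exact_mod_cast hneg
  refine ⟨g μ, hgμ, tendsto_nhds_unique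
    ((tendsto_algebraMap_sub a μ).mul hg.continuousAt.tendsto |>.mono_left nhdsWithin_le_nhds)
    (f := fun z ↦ (algebraMap 𝕜 A z - a) * g z) (l := 𝓝[≠] μ) ?_⟩
  have hzero : Tendsto (fun z ↦ (z - μ) ^ (-n) • (1 : A)) (𝓝[≠] μ) (𝓝 0) := by
    have hpow : ContinuousAt (fun z ↦ (z - μ) ^ (-n) • (1 : A)) μ :=
      ((continuous_sub_right μ).continuousAt.zpow₀ (-n) (.inr (by lia))).smul_const 1
    simpa [zero_zpow, hn_neg.ne] using hpow.tendsto.mono_left nhdsWithin_le_nhds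
  refine hzero.congr' ?_
  filter_upwards [self_mem_nhdsWithin, hiso, hresolvent] with z hzμ hz hfactor
  have hgz : g z = (z - μ) ^ (-n) • resolvent a z := by
    rw [hfactor, zpow_neg, inv_smul_smul₀ (zpow_ne_zero n (sub_ne_zero.2 hzμ))]
  rw [hgz, mul_smul_comm, resolvent, Ring.mul_inverse_cancel _ hz]

end MeromorphicResolvent

theorem meromorphicAt_resolvent_of_norm_zpow_le {A : Type*} [NormedRing A] [NormedAlgebra ℂ A]
    [CompleteSpace A] {T : Aˣ} {M : ℝ} {k : ℕ}
    (hT : ∀ n : ℤ, ‖(↑(T ^ n) : A)‖ ≤ M * (|(n : ℝ)| + 1) ^ k) {μ : ℂ} (hμ : μ ≠ 0)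
    (hiso : ∀ᶠ z in 𝓝[≠] μ, z ∈ resolventSet ℂ (T : A)) :
    MeromorphicAt (resolvent (T : A)) μ := by
  have hdiff : ∀ᶠ z in 𝓝[≠] μ, DifferentiableAt ℂ (resolvent (T : A)) z :=
    hiso.mono fun z hz ↦ (spectrum.hasDerivAt_resolvent_const_left hz).differentiableAt
  set B : ℂ → ℝ := fun w ↦ M * k ! * (‖w‖ ^ k + ‖(↑T⁻¹ : A)‖)
  have hB : ∀ᶠ w in 𝓝 μ, B w ≤ B μ + 1 :=
    (show Continuous B by fun_prop).tendsto μ |>.eventually_le_const (lt_add_one _)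
  have hgrowth : ∀ᶠ w in 𝓝[≠] μ, ‖resolvent (T : A) w‖ * |‖w‖ - 1| ^ (k + 1) ≤ B μ + 1 :=
    eventually_nhdsWithin_of_eventually_nhds <| hB.mono fun w hw ↦
      (norm_resolvent_mul_abs_norm_sub_one_pow_le hT w).trans hw
  exact meromorphicAt_of_isBigO_sub_pow_smul hdiff
    (isBigO_sub_pow_smul_of_norm_mul_abs_norm_sub_one_pow_le hμ hdiff hgrowth)

theorem eventually_mem_resolventSet_of_inter_spectrum_eq_singleton {𝕜 A : Type*} [CommSemiring 𝕜]
    [TopologicalSpace 𝕜] [Ring A] [Algebra 𝕜 A] {a : A} {μ : 𝕜} {U : Set 𝕜} (hU : IsOpen U)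
    (hUμ : U ∩ spectrum 𝕜 a = {μ}) : ∀ᶠ z in 𝓝[≠] μ, z ∈ resolventSet 𝕜 a := by
  have hμU : μ ∈ U := (hUμ.ge rfl).1
  filter_upwards [self_mem_nhdsWithin, mem_nhdsWithin_of_mem_nhds (hU.mem_nhds hμU)] with z hz hzU
  by_contra hmem
  exact hz (hUμ.le ⟨hzU, hmem⟩)

theorem isolated_spectrum_is_eigenvalue_general
    {X : Type*} [NormedAddCommGroup X] [NormedSpace ℂ X] [CompleteSpace X]
    (T : (X →L[ℂ] X)ˣ)
    (hgrowth : ∃ (M : ℝ) (k : ℕ), ∀ n : ℤ,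
      ‖((T ^ n : (X →L[ℂ] X)ˣ) : X →L[ℂ] X)‖ ≤ M * (|(n : ℝ)| + 1) ^ k)
    (μ : ℂ) (hμ : μ ∈ spectrum ℂ (T : X →L[ℂ] X))
    (hiso : ∃ U : Set ℂ, IsOpen U ∧ U ∩ spectrum ℂ (T : X →L[ℂ] X) = {μ}) :
    ∃ x : X, x ≠ 0 ∧ (T : X →L[ℂ] X) x = μ • x := by
  obtain ⟨M, k, hT⟩ := hgrowth
  obtain ⟨U, hU, hUμ⟩ := hiso
  have hμ₀ : μ ≠ 0 := spectrum.ne_zero_of_mem_of_unit hμ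
  have hpunctured := eventually_mem_resolventSet_of_inter_spectrum_eq_singleton hU hUμ
  obtain ⟨F, hF, hTF⟩ := exists_ne_zero_algebraMap_sub_mul_eq_zero hμ hpunctured
    (meromorphicAt_resolvent_of_norm_zpow_le hT hμ₀ hpunctured)
  obtain ⟨y, hy⟩ := DFunLike.ne_iff.1 hF
  have hTFy : μ • F y - (T : X →L[ℂ] X) (F y) = 0 := by
    simpa [Algebra.algebraMap_eq_smul_one] using DFunLike.congr_fun hTF y
  exact ⟨F y, hy, (sub_eq_zero.1 hTFy).symm⟩

/-- An isolated point of the spectrum of a power-bounded operator on a complex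
Banach space is an eigenvalue. -/
theorem isolated_spectrum_is_eigenvalue
    {X : Type*} [NormedAddCommGroup X] [NormedSpace ℂ X] [CompleteSpace X]
    (T : (X →L[ℂ] X)ˣ)
    (hpb : ∃ M : ℝ, ∀ n : ℤ, ‖((T ^ n : (X →L[ℂ] X)ˣ) : X →L[ℂ] X)‖ ≤ M)
    (μ : ℂ) (hμ : μ ∈ spectrum ℂ (T : X →L[ℂ] X))
    (hiso : ∃ U : Set ℂ, IsOpen U ∧ U ∩ spectrum ℂ (T : X →L[ℂ] X) = {μ}) :
    ∃ x : X, x ≠ 0 ∧ (T : X →L[ℂ] X) x = μ • x := by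
  obtain ⟨M, hM⟩ := hpb
  exact isolated_spectrum_is_eigenvalue_general T ⟨M, 0, by simpa using hM⟩ μ hμ hiso
end

section
/- Let X be a complex Banach space and let T ∈ B(X) be a power-bounded operator whose spectrum is a finite set σ(T) = {λ₁, ..., λ_m} of m distinct complex numbers. Then T is an algebraic operator satisfying ∏_{j=1}^m (T − λⱼ I) = 0. -/
/-!
If `‖uⁿ‖ ≤ M` for all `n : ℤ`, then `sup_n ‖uⁿ x‖` is an equivalent norm for which `u` acts as an
isometry, so the resolvent grows at most like the inverse distance to the unit circle. Near an
isolated singularity `c` on the circle such growth forces a simple pole: on `‖z - c‖ = r` the weight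
`(z - c) + r² c z / (z - c)` equals `c (‖z‖² - 1)`, which compensates for the growth, and as `r → 0`
the maximum principle on annuli bounds `(z - c) R(z)`. Hence, if the polynomial `p` vanishes on the
finite spectrum, all singularities of `p(u) R(z)` are removable. This function tends to zero at
infinity, so it is zero by Liouville's theorem, and `p(u) = 0` because `R(z)` is invertible.
-/

open Asymptotics Filter Metric Polynomial Set Topology

section RemovableSingularities

theorem limUnder_nhdsNE_eq {X Y : Type*} [TopologicalSpace X] [TopologicalSpace Y] [T2Space Y]
    {f : X → Y} {x : X} [NeBot (𝓝[≠] x)] (hf : ContinuousAt f x) :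
    @limUnder _ _ _ ⟨f x⟩ (𝓝[≠] x) f = f x :=
  (hf.tendsto.mono_left nhdsWithin_le_nhds).limUnder_eq

variable {E : Type*} [NormedAddCommGroup E] [NormedSpace ℂ E] [CompleteSpace E] {f : ℂ → E}

theorem differentiableAt_limUnder_nhdsNE {c : ℂ}
    (hd : ∀ᶠ z in 𝓝[≠] c, DifferentiableAt ℂ f z) (hb : f =O[𝓝[≠] c] fun _ => (1 : ℝ)) :
    DifferentiableAt ℂ (fun w => limUnder (𝓝[≠] w) f) c := by
  have heq : (fun w => limUnder (𝓝[≠] w) f) =ᶠ[𝓝[≠] c] f :=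
    hd.mono fun z hz => limUnder_nhdsNE_eq hz.continuousAt
  have hlim : Tendsto f (𝓝[≠] c) (𝓝 (limUnder (𝓝[≠] c) f)) :=
    Complex.tendsto_limUnder_of_differentiable_on_punctured_nhds_of_bounded_under hd
      ((isBigO_one_iff ℝ).1 (hb.sub (isBigO_const_const (f c) one_ne_zero _)))
  refine (Complex.analyticAt_of_differentiable_on_punctured_nhds_of_continuousAt ?_
    (continuousWithinAt_compl_self.1 (hlim.congr' heq.symm))).differentiableAt
  filter_upwards [eventually_nhdsNE_eventually_nhds_iff.2 heq, hd] with z hz hdz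
  exact hdz.congr_of_eventuallyEq hz

theorem eq_zero_of_finite_removable_singularities {s : Set ℂ} (hs : s.Finite)
    (hd : ∀ z ∉ s, DifferentiableAt ℂ f z)
    (hb : ∀ c ∈ s, f =O[𝓝[≠] c] fun _ => (1 : ℝ))
    (hf : Tendsto f (cocompact ℂ) (𝓝 0)) {z : ℂ} (hz : z ∉ s) : f z = 0 := by
  set g : ℂ → E := fun w => limUnder (𝓝[≠] w) f
  have hgf : ∀ w ∉ s, g w = f w := fun w hw => limUnder_nhdsNE_eq (hd w hw).continuousAt
  have hg : Differentiable ℂ g := fun c => by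
    refine differentiableAt_limUnder_nhdsNE
      (Eventually.mono (nhdsNE_le_cofinite c hs.compl_mem_cofinite) hd) ?_
    by_cases hc : c ∈ s
    · exact hb c hc
    · exact ((hd c hc).continuousAt.tendsto.isBigO_one ℝ).mono nhdsWithin_le_nhds
  have hg0 : Tendsto g (cocompact ℂ) (𝓝 0) := hf.congr' <| by
    filter_upwards [hs.isCompact.compl_mem_cocompact] with w hw using (hgf w hw).symm
  rw [← hgf z hz, hg.apply_eq_of_tendsto_cocompact z hg0]

end RemovableSingularities

section SimplePole

variable {E : Type*} [NormedAddCommGroup E] [NormedSpace ℂ E] {f : ℂ → E} {c : ℂ}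

theorem norm_le_on_annulus_of_norm_le_on_spheres {r ρ C : ℝ}
    (hd : DifferentiableOn ℂ f (closedBall c ρ \ ball c r))
    (hr : ∀ z ∈ sphere c r, ‖f z‖ ≤ C) (hρ : ∀ z ∈ sphere c ρ, ‖f z‖ ≤ C)
    {z : ℂ} (hz : z ∈ closedBall c ρ \ ball c r) : ‖f z‖ ≤ C := by
  by_cases hzr : z ∈ sphere c r
  · exact hr z hzr
  by_cases hzρ : z ∈ sphere c ρ
  · exact hρ z hzρ
  set U : Set ℂ := ball c ρ \ closedBall c r
  have hU : IsOpen U := isOpen_ball.sdiff isClosed_closedBall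
  have hclosure : closure U ⊆ closedBall c ρ \ ball c r :=
    closure_minimal (sdiff_subset_sdiff ball_subset_closedBall ball_subset_closedBall)
      (isClosed_closedBall.sdiff isOpen_ball)
  have mem_sphere_or_mem : ∀ w ∈ closedBall c ρ \ ball c r,
      w ∈ sphere c r ∨ w ∈ sphere c ρ ∨ w ∈ U := fun w hw => by
    simp only [U, Set.mem_sdiff, mem_closedBall, mem_ball, mem_sphere] at hw ⊢
    grind
  refine Complex.norm_le_of_forall_mem_frontier_norm_le (isBounded_ball.subset sdiff_subset)
    (hd.mono hclosure).diffContOnCl (fun w hw => ?_)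
    (subset_closure (((mem_sphere_or_mem z hz).resolve_left hzr).resolve_left hzρ))
  rcases mem_sphere_or_mem w (hclosure hw.1) with h | h | h
  · exact hr w h
  · exact hρ w h
  · exact absurd (hU.interior_eq.symm ▸ h) hw.2

/-- A weight, holomorphic in `z ≠ c`, which for `r = 0` is `z - c` and for `‖c‖ = 1` cancels, on the
circle `‖z - c‖ = r`, a growth like the inverse distance to the unit circle. -/
noncomputable def poleWeight (c : ℂ) (r : ℝ) (z : ℂ) : ℂ :=
  (z - c) + r ^ 2 / (z - c) * (c * z)

theorem norm_poleWeight (hc : ‖c‖ = 1) {z : ℂ} (hz : z ≠ c) :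
    ‖poleWeight c ‖z - c‖ z‖ = |‖z‖ ^ 2 - 1| := by
  have hcc : c * (starRingEnd ℂ) c = 1 := by simp [Complex.mul_conj', hc]
  have hdiv : (‖z - c‖ : ℂ) ^ 2 / (z - c) = (starRingEnd ℂ) (z - c) := by
    rw [← Complex.mul_conj', mul_div_cancel_left₀ _ (sub_ne_zero.2 hz)]
  have heq : poleWeight c ‖z - c‖ z = c * ((‖z‖ ^ 2 - 1 : ℝ) : ℂ) := by
    rw [poleWeight, hdiv]
    push_cast
    rw [← Complex.mul_conj', map_sub]
    linear_combination -z * hcc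
  rw [heq, norm_mul, hc, one_mul, Complex.norm_real, Real.norm_eq_abs]

theorem continuousOn_poleWeight (c : ℂ) :
    ContinuousOn (fun x : ℝ × ℂ => poleWeight c x.1 x.2) {x | x.2 ≠ c} := by
  unfold poleWeight
  have h : ∀ x ∈ {x : ℝ × ℂ | x.2 ≠ c}, x.2 - c ≠ 0 := fun x hx => sub_ne_zero.2 hx
  fun_prop (disch := assumption)

theorem exists_forall_norm_poleWeight_smul_le (hc : ‖c‖ = 1) {ρ K : ℝ} (hρ : 0 < ρ)
    (hd : DifferentiableOn ℂ f (closedBall c ρ \ {c}))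
    (hK : ∀ z ∈ closedBall c ρ \ {c}, |‖z‖ ^ 2 - 1| * ‖f z‖ ≤ K) :
    ∃ C, ∀ z ∈ closedBall c ρ \ {c}, ∀ r ∈ Ioc 0 ‖z - c‖, ‖poleWeight c r z • f z‖ ≤ C := by
  have hsphere : sphere c ρ ⊆ closedBall c ρ \ {c} := fun z hz =>
    ⟨sphere_subset_closedBall hz, ne_of_mem_sphere hz hρ.ne'⟩
  obtain ⟨B, hB⟩ : ∃ B, ∀ x ∈ Icc 0 ρ ×ˢ sphere c ρ, ‖poleWeight c x.1 x.2 • f x.2‖ ≤ B :=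
    (isCompact_Icc.prod (isCompact_sphere c ρ)).exists_bound_of_continuousOn <|
      ((continuousOn_poleWeight c).mono fun x hx => (hsphere hx.2).2).smul <|
        hd.continuousOn.comp continuousOn_snd fun x hx => hsphere hx.2
  refine ⟨max K B, fun z hz r hr => ?_⟩
  have hrρ : r ≤ ρ := hr.2.trans (mem_closedBall_iff_norm.1 hz.1)
  have hannulus : closedBall c ρ \ ball c r ⊆ closedBall c ρ \ {c} :=
    sdiff_subset_sdiff_right (singleton_subset_iff.2 (mem_ball_self hr.1))
  refine norm_le_on_annulus_of_norm_le_on_spheres (r := r) (f := fun w => poleWeight c r w • f w)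
    (.smul ?_ (hd.mono hannulus)) (fun w hw => le_max_of_le_left ?_)
    (fun w hw => le_max_of_le_right (hB (r, w) ⟨⟨hr.1.le, hrρ⟩, hw⟩))
    ⟨hz.1, fun h => (mem_ball_iff_norm.1 h).not_ge hr.2⟩
  · have hne : ∀ w ∈ closedBall c ρ \ ball c r, w - c ≠ 0 := fun w hw =>
      sub_ne_zero.2 (hannulus hw).2
    unfold poleWeight
    fun_prop (disch := assumption)
  · have hwc : w ≠ c := ne_of_mem_sphere hw hr.1.ne'
    rw [norm_smul, ← mem_sphere_iff_norm.1 hw, norm_poleWeight hc hwc]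
    exact hK w ⟨closedBall_subset_closedBall hrρ (sphere_subset_closedBall hw), hwc⟩

theorem isBigO_sub_smul_of_norm_eq_one (hc : ‖c‖ = 1)
    (hd : ∀ᶠ z in 𝓝[≠] c, DifferentiableAt ℂ f z)
    (hf : (fun z => (‖z‖ - 1) • f z) =O[𝓝[≠] c] fun _ => (1 : ℝ)) :
    (fun z => (z - c) • f z) =O[𝓝[≠] c] fun _ => (1 : ℝ) := by
  have hsq : (fun z => (‖z‖ ^ 2 - 1) • f z) =O[𝓝[≠] c] fun _ => (1 : ℝ) := by
    have hadd : (fun z : ℂ => ‖z‖ + 1) =O[𝓝[≠] c] fun _ => (1 : ℝ) :=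
      ((Continuous.tendsto (by fun_prop) c).isBigO_one ℝ).mono nhdsWithin_le_nhds
    refine (hadd.smul hf).congr (fun z => ?_) (fun _ => one_smul ℝ 1)
    rw [smul_smul]
    ring_nf
  obtain ⟨K, hK⟩ := hsq.bound
  obtain ⟨ρ, hρ, hball⟩ :=
    (nhdsWithin_hasBasis nhds_basis_closedBall _).eventually_iff.1 (hd.and hK)
  obtain ⟨C, hC⟩ := exists_forall_norm_poleWeight_smul_le hc hρ (K := K)
    (fun z hz => (hball hz).1.differentiableWithinAt)
    (fun z hz => by simpa [norm_smul] using (hball hz).2)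
  refine .of_bound C ?_
  filter_upwards [inter_mem_nhdsWithin _ (closedBall_mem_nhds c hρ)] with z ⟨hzc, hzρ⟩
  have hlim : Tendsto (fun r : ℝ => ‖poleWeight c r z • f z‖) (𝓝[>] 0) (𝓝 ‖(z - c) • f z‖) := by
    have h : Continuous fun r : ℝ => ‖poleWeight c r z • f z‖ := by
      unfold poleWeight
      fun_prop
    simpa [poleWeight] using (h.tendsto 0).mono_left nhdsWithin_le_nhds
  rw [norm_one, mul_one]
  refine le_of_tendsto hlim ?_
  filter_upwards [Ioc_mem_nhdsGT (norm_pos_iff.2 (sub_ne_zero.2 hzc))] with r hr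
  exact hC z ⟨hzρ, hzc⟩ r hr

theorem isBigO_sub_smul_of_isBigO_norm_sub_one_smul
    (hd : ∀ᶠ z in 𝓝[≠] c, DifferentiableAt ℂ f z)
    (hf : (fun z => (‖z‖ - 1) • f z) =O[𝓝[≠] c] fun _ => (1 : ℝ)) :
    (fun z => (z - c) • f z) =O[𝓝[≠] c] fun _ => (1 : ℝ) := by
  by_cases hc : ‖c‖ = 1
  · exact isBigO_sub_smul_of_norm_eq_one hc hd hf
  have hc' : ‖c‖ - 1 ≠ 0 := sub_ne_zero.2 hc
  have hquot : (fun z : ℂ => (z - c) / ((‖z‖ - 1 : ℝ) : ℂ)) =O[𝓝[≠] c] fun _ => (1 : ℝ) := by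
    have hcont : ContinuousAt (fun z : ℂ => (z - c) / ((‖z‖ - 1 : ℝ) : ℂ)) c := by
      have : ((‖c‖ - 1 : ℝ) : ℂ) ≠ 0 := Complex.ofReal_ne_zero.2 hc'
      fun_prop (disch := assumption)
    exact (hcont.tendsto.isBigO_one ℝ).mono nhdsWithin_le_nhds
  have hne : ∀ᶠ z : ℂ in 𝓝[≠] c, ‖z‖ - 1 ≠ 0 :=
    nhdsWithin_le_nhds ((continuous_norm.sub continuous_const).continuousAt.eventually_ne hc')
  refine (hquot.smul hf).congr' ?_ (by simp)
  filter_upwards [hne] with z hz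
  rw [← Complex.coe_smul, smul_smul, div_mul_cancel₀ _ (Complex.ofReal_ne_zero.2 hz)]

end SimplePole

section ResolventGrowth

theorem abs_sub_one_mul_le_of_abs_mul_sub_le {a : ℤ → ℝ} (ha : BddAbove (range a)) {t K : ℝ}
    (ht : 0 ≤ t) (h : ∀ n, |t * a n - a (n + 1)| ≤ K) (n : ℤ) : |t - 1| * a n ≤ K := by
  set S := ⨆ k, a k
  have hS : ∀ k, a k ≤ S := le_ciSup ha
  have hupper : t * S ≤ K + S := by
    rw [Real.mul_iSup_of_nonneg ht]
    exact ciSup_le fun k => by linarith [(abs_le.1 (h k)).2, hS (k + 1)]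
  have hlower : S ≤ K + t * S := ciSup_le fun k => by
    have hk := (abs_le.1 (h (k - 1))).1
    rw [sub_add_cancel] at hk
    linarith [mul_le_mul_of_nonneg_left (hS (k - 1)) ht]
  calc |t - 1| * a n ≤ |t - 1| * S := mul_le_mul_of_nonneg_left (hS n) (abs_nonneg _)
    _ ≤ K := by rcases abs_cases (t - 1) with ⟨h, -⟩ | ⟨h, -⟩ <;> rw [h] <;> linarith

theorem abs_norm_sub_one_mul_norm_le {𝕜 A : Type*} [NormedField 𝕜] [NormedRing A]
    [NormedAlgebra 𝕜 A] {u : Aˣ} {M : ℝ} (hM : ∀ n : ℤ, ‖((u ^ n : Aˣ) : A)‖ ≤ M) (z : 𝕜) (x : A) :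
    |‖z‖ - 1| * ‖x‖ ≤ M * ‖z • x - u * x‖ := by
  have hmul : ∀ (n : ℤ) (y : A), ‖((u ^ n : Aˣ) : A) * y‖ ≤ M * ‖y‖ := fun n y =>
    (norm_mul_le _ _).trans (mul_le_mul_of_nonneg_right (hM n) (norm_nonneg y))
  have hstep : ∀ n : ℤ, |‖z‖ * ‖((u ^ n : Aˣ) : A) * x‖ - ‖((u ^ (n + 1) : Aˣ) : A) * x‖| ≤
      M * ‖z • x - u * x‖ := fun n => by
    calc |‖z‖ * ‖((u ^ n : Aˣ) : A) * x‖ - ‖((u ^ (n + 1) : Aˣ) : A) * x‖|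
        ≤ ‖z • (((u ^ n : Aˣ) : A) * x) - ((u ^ (n + 1) : Aˣ) : A) * x‖ := by
          rw [← norm_smul]
          exact abs_norm_sub_norm_le _ _
      _ = ‖((u ^ n : Aˣ) : A) * (z • x - u * x)‖ := by
          rw [zpow_add_one, Units.val_mul, mul_sub, mul_smul_comm, mul_assoc]
      _ ≤ M * ‖z • x - u * x‖ := hmul n _
  have hbdd : BddAbove (range fun n : ℤ => ‖((u ^ n : Aˣ) : A) * x‖) :=
    ⟨M * ‖x‖, forall_mem_range.2 fun n => hmul n x⟩
  simpa using abs_sub_one_mul_le_of_abs_mul_sub_le hbdd (norm_nonneg z) hstep 0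

theorem sub_algebraMap_mul_resolvent {R A : Type*} [CommRing R] [Ring A] [Algebra R A] {a : A}
    {z : R} (hz : z ∈ resolventSet R a) (c : R) :
    (a - algebraMap R A c) * resolvent a z = (z - c) • resolvent a z - 1 := by
  have hinv : (algebraMap R A z - a) * resolvent a z = 1 := Ring.mul_inverse_cancel _ hz
  rw [← hinv, Algebra.smul_def, map_sub, ← sub_mul]
  congr 1
  abel

end ResolventGrowth

section PowerBounded

variable {A : Type*} [NormedRing A] [NormedAlgebra ℂ A] [CompleteSpace A] {u : Aˣ} {M : ℝ}

theorem isBigO_sub_smul_resolvent (hM : ∀ n : ℤ, ‖((u ^ n : Aˣ) : A)‖ ≤ M) {c : ℂ}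
    (hc : ∀ᶠ z in 𝓝[≠] c, z ∈ resolventSet ℂ (u : A)) :
    (fun z => (z - c) • resolvent (u : A) z) =O[𝓝[≠] c] fun _ => (1 : ℝ) := by
  refine isBigO_sub_smul_of_isBigO_norm_sub_one_smul
    (hc.mono fun z hz => (spectrum.hasDerivAt_resolvent_const_left hz).differentiableAt)
    (.of_bound (M * ‖(1 : A)‖) (hc.mono fun z hz => ?_))
  have heq : z • resolvent (u : A) z - u * resolvent (u : A) z = 1 := by
    rw [Algebra.smul_def, ← sub_mul]
    exact Ring.mul_inverse_cancel _ hz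
  simpa [norm_smul, heq] using abs_norm_sub_one_mul_norm_le hM z (resolvent (u : A) z)

theorem isBigO_aeval_mul_resolvent (hM : ∀ n : ℤ, ‖((u ^ n : Aˣ) : A)‖ ≤ M) {c : ℂ}
    (hc : ∀ᶠ z in 𝓝[≠] c, z ∈ resolventSet ℂ (u : A)) {p : ℂ[X]} (hp : p.IsRoot c) :
    (fun z => aeval (u : A) p * resolvent (u : A) z) =O[𝓝[≠] c] fun _ => (1 : ℝ) := by
  obtain ⟨q, rfl⟩ := dvd_iff_isRoot.2 hp
  have hconst : ∀ a : A, (fun _ => a) =O[𝓝[≠] c] fun _ => (1 : ℝ) := fun a =>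
    isBigO_const_const a one_ne_zero _
  have hbounded : (fun z => aeval (u : A) q * ((z - c) • resolvent (u : A) z - 1)) =O[𝓝[≠] c]
      fun _ => (1 : ℝ) := by
    simpa only [mul_one] using (hconst _).mul ((isBigO_sub_smul_resolvent hM hc).sub (hconst 1))
  refine hbounded.congr' (hc.mono fun z hz => ?_) .rfl
  calc aeval (u : A) q * ((z - c) • resolvent (u : A) z - 1)
      = aeval (u : A) q * (((u : A) - algebraMap ℂ A c) * resolvent (u : A) z) := by
        rw [sub_algebraMap_mul_resolvent hz c]
    _ = aeval (u : A) ((X - C c) * q) * resolvent (u : A) z := by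
        rw [mul_comm (X - C c) q, map_mul, aeval_sub, aeval_X, aeval_C, mul_assoc]

theorem aeval_eq_zero_of_finite_spectrum (hM : ∀ n : ℤ, ‖((u ^ n : Aˣ) : A)‖ ≤ M)
    (hfin : (spectrum ℂ (u : A)).Finite) {p : ℂ[X]} (hp : ∀ c ∈ spectrum ℂ (u : A), p.IsRoot c) :
    aeval (u : A) p = 0 := by
  have hres : ∀ z ∉ spectrum ℂ (u : A), z ∈ resolventSet ℂ (u : A) := fun z => not_not.1
  have hisolated : ∀ c, ∀ᶠ z in 𝓝[≠] c, z ∈ resolventSet ℂ (u : A) := fun c =>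
    Eventually.mono (nhdsNE_le_cofinite c hfin.compl_mem_cofinite) hres
  have hdiff : ∀ z ∉ spectrum ℂ (u : A),
      DifferentiableAt ℂ (fun w => aeval (u : A) p * resolvent (u : A) w) z := fun z hz =>
    (spectrum.hasDerivAt_resolvent_const_left (hres z hz)).differentiableAt.const_mul _
  have hinfty : Tendsto (fun z => aeval (u : A) p * resolvent (u : A) z) (cocompact ℂ) (𝓝 0) := by
    simpa [cobounded_eq_cocompact] using
      (spectrum.resolvent_tendsto_cobounded (𝕜 := ℂ) (u : A)).const_mul (aeval (u : A) p)
  obtain ⟨z, hz⟩ := hfin.infinite_compl.nonempty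
  have hzero : aeval (u : A) p * resolvent (u : A) z = 0 :=
    eq_zero_of_finite_removable_singularities hfin hdiff
      (fun c hc => isBigO_aeval_mul_resolvent hM (hisolated c) (hp c hc)) hinfty hz
  exact (spectrum.isUnit_resolvent.1 (hres z hz)).mul_left_eq_zero.1 hzero

theorem powerBounded_finite_spectrum_algebraic_general
    (hpb : ∃ M : ℝ, ∀ n : ℤ, ‖((u ^ n : Aˣ) : A)‖ ≤ M) {m : ℕ} {μ : Fin m → ℂ}
    (hspec : spectrum ℂ (u : A) ⊆ range μ) :
    ((List.finRange m).map fun j => (u : A) - μ j • (1 : A)).prod = 0 := by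
  obtain ⟨M, hM⟩ := hpb
  have hroots : ∀ c ∈ spectrum ℂ (u : A),
      ((List.finRange m).map fun j => X - C (μ j)).prod.IsRoot c := fun c hc => by
    obtain ⟨j, rfl⟩ := hspec hc
    simp [IsRoot, eval_list_prod, List.prod_eq_zero_iff, sub_eq_zero]
  simpa [map_list_prod, Function.comp_def, Algebra.algebraMap_eq_smul_one] using
    aeval_eq_zero_of_finite_spectrum hM ((finite_range μ).subset hspec) hroots

end PowerBounded

/-- A power-bounded operator with finite spectrum {λ₁, …, λ_m} is algebraic:
∏ (T − λⱼ I) = 0. -/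
theorem powerBounded_finite_spectrum_algebraic
    {X : Type*} [NormedAddCommGroup X] [NormedSpace ℂ X] [CompleteSpace X]
    (T : (X →L[ℂ] X)ˣ)
    (hpb : ∃ M : ℝ, ∀ n : ℤ, ‖((T ^ n : (X →L[ℂ] X)ˣ) : X →L[ℂ] X)‖ ≤ M)
    (m : ℕ) (μ : Fin m → ℂ) (hinj : Function.Injective μ)
    (hspec : spectrum ℂ (T : X →L[ℂ] X) = Set.range μ) :
    (((List.finRange m).map
      (fun j => (T : X →L[ℂ] X) - μ j • (1 : X →L[ℂ] X))).prod = 0) :=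
  powerBounded_finite_spectrum_algebraic_general hpb hspec.subset
end

section
/- Let B be a complex unital Banach algebra, let a ∈ B be invertible with sup_{n∈ℤ} ‖aⁿ‖ < ∞, and suppose σ(a) = {λ} is a singleton (so |λ| = 1). Then the element N = λ̄ a − e is quasinilpotent, i.e., σ(N) = {0}, and moreover N = 0. -/
/-!
An invertible element `a` with bounded integer powers and `σ(a) = {μ}` has `|μ| = 1`. The linear
pencil `p z = (z + 1) • 1 - ((z - 1) * μ⁻¹) • a` is invertible for every `z`, because
`z + 1 = z - 1` has no solution, so `F z = (p z)⁻¹` is entire. The two coefficients of `p z` have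
equal norm only on the imaginary axis, and boundedness of the powers of `a` gives
`|re z| * ‖F z‖ = O(1 + ‖z‖)`. Multiplication by `z ^ 2 + R ^ 2`, whose norm on the circle of radius
`R` is `2 * R * |re z|`, removes the singular factor, and the maximum principle shows that `F` is
bounded. By Liouville's theorem `F`, and therefore `p`, is constant, and `p (-1) = p 1` reads
`2 • μ⁻¹ • a = 2 • 1`.
-/

lemma sq_add_norm_sq_eq (z : ℂ) : z ^ 2 + (‖z‖ : ℂ) ^ 2 = ((2 * z.re : ℝ) : ℂ) * z := by
  rw [← Complex.mul_conj', ← Complex.add_conj]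
  ring

section Liouville

variable {E : Type*} [NormedAddCommGroup E] [NormedSpace ℂ E] {f : ℂ → E} {C : ℝ}

lemma norm_sq_add_sq_smul_le_of_abs_re_mul_norm_le {R K : ℝ}
    (hf : DiffContOnCl ℂ f (Metric.ball 0 R)) (hK : ∀ w, ‖w‖ = R → |w.re| * ‖f w‖ ≤ K)
    {z : ℂ} (hz : ‖z‖ < R) : ‖(z ^ 2 + (R : ℂ) ^ 2) • f z‖ ≤ 2 * R * K := by
  have hR : 0 < R := (norm_nonneg z).trans_lt hz
  have hdiff : Differentiable ℂ fun w : ℂ => w ^ 2 + (R : ℂ) ^ 2 := by fun_prop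
  refine Complex.norm_le_of_forall_mem_frontier_norm_le Metric.isBounded_ball
    (hdiff.diffContOnCl.smul hf) (fun w hw => ?_) (subset_closure (mem_ball_zero_iff.2 hz))
  rw [frontier_ball _ hR.ne', mem_sphere_zero_iff_norm] at hw
  subst hw
  calc ‖(w ^ 2 + (‖w‖ : ℂ) ^ 2) • f w‖ = 2 * ‖w‖ * (|w.re| * ‖f w‖) := by
        rw [sq_add_norm_sq_eq, norm_smul, norm_mul, Complex.norm_real, Real.norm_eq_abs, abs_mul,
          abs_two]
        ring
    _ ≤ 2 * ‖w‖ * K := by gcongr; exact hK w rfl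

lemma norm_le_of_abs_re_mul_norm_le (hf : Differentiable ℂ f)
    (hC : ∀ z, |z.re| * ‖f z‖ ≤ C * (1 + ‖z‖)) (z : ℂ) : ‖f z‖ ≤ 8 * C := by
  have hC0 : 0 ≤ C := by simpa using hC 0
  have hz := norm_nonneg z
  obtain ⟨R, hR, hzR⟩ : ∃ R : ℝ, 1 ≤ R ∧ 2 * ‖z‖ ≤ R :=
    ⟨1 + 2 * ‖z‖, by linarith, by linarith⟩
  have hlower : R ^ 2 / 2 ≤ ‖z ^ 2 + (R : ℂ) ^ 2‖ := by
    have h := norm_sub_le_norm_add ((R : ℂ) ^ 2) (z ^ 2)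
    rw [norm_pow, norm_pow, Complex.norm_real, Real.norm_of_nonneg (by positivity), add_comm] at h
    nlinarith
  refine le_of_mul_le_mul_left ?_ (by positivity : 0 < R ^ 2 / 2)
  calc R ^ 2 / 2 * ‖f z‖ ≤ ‖z ^ 2 + (R : ℂ) ^ 2‖ * ‖f z‖ := by gcongr
    _ = ‖(z ^ 2 + (R : ℂ) ^ 2) • f z‖ := (norm_smul _ _).symm
    _ ≤ 2 * R * (C * (1 + R)) :=
      norm_sq_add_sq_smul_le_of_abs_re_mul_norm_le hf.diffContOnCl (fun w hw => hw ▸ hC w)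
        (by linarith)
    _ ≤ 2 * R * (C * (R + R)) := by gcongr
    _ = R ^ 2 / 2 * (8 * C) := by ring

lemma apply_eq_apply_of_abs_re_mul_norm_le (hf : Differentiable ℂ f)
    (hC : ∀ z, |z.re| * ‖f z‖ ≤ C * (1 + ‖z‖)) (z w : ℂ) : f z = f w :=
  hf.apply_eq_apply_of_bounded (isBounded_iff_forall_norm_le.2
    ⟨8 * C, Set.forall_mem_range.2 (norm_le_of_abs_re_mul_norm_le hf hC)⟩) z w

end Liouville

lemma two_mul_abs_re_le_abs_norm_sub_norm_mul (z : ℂ) :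
    2 * |z.re| ≤ |‖z + 1‖ - ‖z - 1‖| * (1 + ‖z‖) := by
  have hdiff : (‖z + 1‖ - ‖z - 1‖) * (‖z + 1‖ + ‖z - 1‖) = 4 * z.re := by
    have hadd := Complex.sq_norm (z + 1)
    have hsub := Complex.sq_norm (z - 1)
    simp only [Complex.normSq_apply, Complex.add_re, Complex.add_im, Complex.sub_re,
      Complex.sub_im, Complex.one_re, Complex.one_im] at hadd hsub
    linear_combination hadd - hsub
  have hsum : ‖z + 1‖ + ‖z - 1‖ ≤ 2 * (1 + ‖z‖) := by
    have hadd := norm_add_le z 1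
    have hsub := norm_sub_le z 1
    rw [norm_one] at hadd hsub
    linarith
  have hre : 4 * |z.re| ≤ |‖z + 1‖ - ‖z - 1‖| * (2 * (1 + ‖z‖)) := by
    calc 4 * |z.re| = |‖z + 1‖ - ‖z - 1‖| * (‖z + 1‖ + ‖z - 1‖) := by
          rw [← abs_of_nonneg (by positivity : 0 ≤ ‖z + 1‖ + ‖z - 1‖), ← abs_mul, hdiff, abs_mul,
            abs_of_pos (four_pos : (0 : ℝ) < 4)]
      _ ≤ |‖z + 1‖ - ‖z - 1‖| * (2 * (1 + ‖z‖)) := by gcongr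
  linarith

lemma norm_mul_abs_norm_sub_norm_le_of_bounded {𝕜 E : Type*} [NormedField 𝕜]
    [SeminormedAddCommGroup E] [NormedSpace 𝕜 E] {y : ℤ → E}
    (hy : BddAbove (Set.range fun n => ‖y n‖)) {α β : 𝕜} {M : ℝ}
    (hM : ∀ n, ‖α • y n - β • y (n + 1)‖ ≤ M) (n : ℤ) : ‖y n‖ * |‖α‖ - ‖β‖| ≤ M := by
  -- The shift `n ↦ n + 1` does not change the supremum, so each coefficient bounds the other.
  set S : ℝ := ⨆ n, ‖y n‖ with hS
  have hyS : ∀ n, ‖y n‖ ≤ S := le_ciSup hy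
  have hα : ‖α‖ * S ≤ M + ‖β‖ * S := by
    rw [hS, Real.mul_iSup_of_nonneg (norm_nonneg α)]
    refine ciSup_le fun k => ?_
    calc ‖α‖ * ‖y k‖ = ‖α • y k‖ := (norm_smul _ _).symm
      _ ≤ ‖α • y k - β • y (k + 1)‖ + ‖β • y (k + 1)‖ := norm_le_norm_sub_add _ _
      _ ≤ M + ‖β‖ * S := by rw [norm_smul β]; gcongr; exacts [hM k, hyS _]
  have hβ : ‖β‖ * S ≤ M + ‖α‖ * S := by
    rw [hS, Real.mul_iSup_of_nonneg (norm_nonneg β)]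
    refine ciSup_le fun k => ?_
    obtain ⟨j, rfl⟩ : ∃ j, k = j + 1 := ⟨k - 1, by ring⟩
    calc ‖β‖ * ‖y (j + 1)‖ = ‖β • y (j + 1)‖ := (norm_smul _ _).symm
      _ ≤ ‖α • y j - β • y (j + 1)‖ + ‖α • y j‖ := by
        rw [norm_sub_rev]; exact norm_le_norm_sub_add _ _
      _ ≤ M + ‖α‖ * S := by rw [norm_smul α]; gcongr; exacts [hM j, hyS _]
  calc ‖y n‖ * |‖α‖ - ‖β‖| ≤ S * |‖α‖ - ‖β‖| := by gcongr; exact hyS n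
    _ = |‖α‖ * S - ‖β‖ * S| := by
      rw [← sub_mul, abs_mul, abs_of_nonneg ((norm_nonneg _).trans (hyS n)), mul_comm]
    _ ≤ M := abs_sub_le_iff.2 ⟨by linarith, by linarith⟩

lemma isUnit_smul_one_sub_smul_of_spectrum_eq_singleton {𝕜 A : Type*} [Field 𝕜] [Ring A]
    [Algebra 𝕜 A] {b : A} {μ α β : 𝕜} (hb : spectrum 𝕜 b = {μ})
    (h : α ≠ β * μ) : IsUnit (α • (1 : A) - β • b) := by
  nontriviality A
  rw [← Algebra.algebraMap_eq_smul_one, ← spectrum.notMem_iff,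
    spectrum.smul_eq_smul β b (hb ▸ Set.singleton_nonempty μ), hb]
  simpa using h

section PowerBounded

variable {B : Type*} [NormedRing B]

lemma norm_mul_abs_norm_sub_norm_le_of_norm_zpow_le {𝕜 : Type*} [NormedField 𝕜]
    [NormedAlgebra 𝕜 B] {a : Bˣ} {v : B} {M : ℝ} (ha : ∀ n : ℤ, ‖((a ^ n : Bˣ) : B)‖ ≤ M)
    {α β : 𝕜} (hv : v * (α • (1 : B) - β • (a : B)) = 1) : ‖v‖ * |‖α‖ - ‖β‖| ≤ M := by
  have hbdd : BddAbove (Set.range fun n : ℤ => ‖v * ((a ^ n : Bˣ) : B)‖) :=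
    ⟨‖v‖ * M, Set.forall_mem_range.2 fun n => (norm_mul_le _ _).trans (by gcongr; exact ha n)⟩
  have hrec (n : ℤ) : α • (v * ((a ^ n : Bˣ) : B)) - β • (v * ((a ^ (n + 1) : Bˣ) : B))
      = ((a ^ n : Bˣ) : B) := by
    calc _ = v * (α • (1 : B) - β • (a : B)) * ((a ^ n : Bˣ) : B) := by
          rw [add_comm, zpow_one_add, Units.val_mul]
          simp only [mul_sub, sub_mul, mul_smul_comm, smul_mul_assoc, mul_one, mul_assoc]
      _ = ((a ^ n : Bˣ) : B) := by rw [hv, one_mul]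
  simpa using norm_mul_abs_norm_sub_norm_le_of_bounded hbdd (fun n => (hrec n).symm ▸ ha n) 0

variable [CompleteSpace B]

lemma norm_le_one_of_mem_spectrum_of_norm_pow_le_s15 {𝕜 : Type*} [NormedField 𝕜] [NormedAlgebra 𝕜 B]
    {b : B} {M : ℝ} (hb : ∀ n : ℕ, ‖b ^ n‖ ≤ M) {μ : 𝕜} (hμ : μ ∈ spectrum 𝕜 b) : ‖μ‖ ≤ 1 := by
  by_contra! h
  obtain ⟨n, hn⟩ := pow_unbounded_of_one_lt (M * ‖(1 : B)‖) h
  refine hn.not_ge ?_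
  calc ‖μ‖ ^ n = ‖μ ^ n‖ := (norm_pow μ n).symm
    _ ≤ ‖b ^ n‖ * ‖(1 : B)‖ := spectrum.norm_le_norm_mul_of_mem (spectrum.pow_mem_pow b n hμ)
    _ ≤ M * ‖(1 : B)‖ := by gcongr; exact hb n

lemma norm_eq_one_of_mem_spectrum_of_norm_zpow_le_s15 {𝕜 : Type*} [NormedField 𝕜] [NormedAlgebra 𝕜 B]
    {a : Bˣ} {M : ℝ} (ha : ∀ n : ℤ, ‖((a ^ n : Bˣ) : B)‖ ≤ M) {μ : 𝕜}
    (hμ : μ ∈ spectrum 𝕜 (a : B)) : ‖μ‖ = 1 := by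
  have hle : ‖μ‖ ≤ 1 :=
    norm_le_one_of_mem_spectrum_of_norm_pow_le_s15 (fun n => by simpa using ha n) hμ
  have hinv : ‖μ⁻¹‖ ≤ 1 :=
    norm_le_one_of_mem_spectrum_of_norm_pow_le_s15 (fun n => by simpa using ha (-n))
      (spectrum.inv₀_mem_inv hμ)
  rw [norm_inv] at hinv
  exact hle.antisymm
    ((inv_le_one₀ (norm_pos_iff.2 (spectrum.ne_zero_of_mem_of_unit hμ))).1 hinv)

theorem eq_smul_one_of_norm_zpow_le_of_spectrum_eq_singleton [NormedAlgebra ℂ B] {a : Bˣ} {M : ℝ}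
    (ha : ∀ n : ℤ, ‖((a ^ n : Bˣ) : B)‖ ≤ M) {μ : ℂ} (hspec : spectrum ℂ (a : B) = {μ}) :
    (a : B) = μ • (1 : B) := by
  have hμ : μ ∈ spectrum ℂ (a : B) := hspec ▸ Set.mem_singleton μ
  have hμ_ne : μ ≠ 0 := spectrum.ne_zero_of_mem_of_unit hμ
  have hμ_norm : ‖μ‖ = 1 := norm_eq_one_of_mem_spectrum_of_norm_zpow_le_s15 ha hμ
  let p : ℂ → B := fun z => (z + 1) • (1 : B) - ((z - 1) * μ⁻¹) • (a : B)
  have hp (z : ℂ) : IsUnit (p z) :=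
    isUnit_smul_one_sub_smul_of_spectrum_eq_singleton hspec fun h => by
      rw [inv_mul_cancel_right₀ hμ_ne] at h
      exact two_ne_zero (α := ℂ) (by linear_combination h)
  have hdiff : Differentiable ℂ fun z => Ring.inverse (p z) :=
    Differentiable.inverse (by fun_prop) hp
  have hbound (z : ℂ) : |z.re| * ‖Ring.inverse (p z)‖ ≤ M / 2 * (1 + ‖z‖) := by
    have hinv : ‖Ring.inverse (p z)‖ * |‖z + 1‖ - ‖z - 1‖| ≤ M := by
      simpa [hμ_norm] using norm_mul_abs_norm_sub_norm_le_of_norm_zpow_le ha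
        (Ring.inverse_mul_cancel (p z) (hp z))
    have hre := mul_le_mul_of_nonneg_right (two_mul_abs_re_le_abs_norm_sub_norm_mul z)
      (norm_nonneg (Ring.inverse (p z)))
    have hmul := mul_le_mul_of_nonneg_right hinv (by positivity : 0 ≤ 1 + ‖z‖)
    linarith
  have hconst : Ring.inverse (p (-1)) = Ring.inverse (p 1) :=
    apply_eq_apply_of_abs_re_mul_norm_le hdiff hbound (-1) 1
  have hp_eq : p (-1) = p 1 := by
    rw [← Ring.inverse_inverse (hp (-1)), hconst, Ring.inverse_inverse (hp 1)]
  have hp_neg_one : p (-1) = (2 : ℂ) • μ⁻¹ • (a : B) := by norm_num [p, smul_smul]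
  have hp_one : p 1 = (2 : ℂ) • (1 : B) := by norm_num [p]
  rw [hp_neg_one, hp_one] at hp_eq
  have hμ_inv : μ⁻¹ • (a : B) = 1 := smul_right_injective B (two_ne_zero (α := ℂ)) hp_eq
  rw [← hμ_inv, smul_inv_smul₀ hμ_ne]

end PowerBounded

/-- If a is invertible with uniformly bounded integer powers and σ(a) = {λ},
then N = λ̄ a − e is quasinilpotent (σ(N) = {0}) and moreover N = 0. -/
theorem quasinilpotent_of_singleton_spectrum
    {B : Type*} [NormedRing B] [NormedAlgebra ℂ B] [CompleteSpace B]
    (a : Bˣ) (hpb : ∃ M : ℝ, ∀ n : ℤ, ‖((a ^ n : Bˣ) : B)‖ ≤ M)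
    (μ : ℂ) (hspec : spectrum ℂ (a : B) = {μ}) :
    spectrum ℂ ((starRingEnd ℂ) μ • (a : B) - 1) = {0} ∧
      (starRingEnd ℂ) μ • (a : B) - 1 = 0 := by
  obtain ⟨M, hM⟩ := hpb
  have hμ : μ ∈ spectrum ℂ (a : B) := hspec ▸ Set.mem_singleton μ
  have hμ_norm : ‖μ‖ = 1 := norm_eq_one_of_mem_spectrum_of_norm_zpow_le_s15 hM hμ
  have hzero : (starRingEnd ℂ) μ • (a : B) - 1 = 0 := by
    rw [eq_smul_one_of_norm_zpow_le_of_spectrum_eq_singleton hM hspec, smul_smul,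
      Complex.conj_mul', hμ_norm, Complex.ofReal_one, one_pow, one_smul, sub_self]
  have : Nontrivial B := not_subsingleton_iff_nontrivial.1 fun _ => by
    simp [spectrum.of_subsingleton] at hμ
  exact ⟨by rw [hzero, spectrum.zero_eq], hzero⟩
end
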